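/- Fix an integer ι ≥ 2 and ν ∈ (0,1/2). There exist C > 0 and N ∈ ℕ such that for all n ≥ N (so that n^{ι−ν−1} > 2π), all β ∈ ℝ, and all x ∈ ℝ: | φ_{β,n}^{(ι)}(x) − 2(2π)^ι n^ν cos(2πn g_{β,n}^{−1}(x) + πnβ + ιπ/2) · sin(πnβ) | ≤ C n^{2ν−1}. -/

import Mathlib

/-!
Write `ω = 2πn`, `ε = n^{-(ι-ν)}`, `δ = ωε` and `h = g⁻¹`. Since `g(x) - x - β = ε sin (ωx)` and
`h(x) - x + β = -ε sin (ω h(x))`, the parameter `β` cancels and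
`φ(x) = ε (sin (ωx) - sin (ω h(x)))`. As `h' = 1 / (1 + δ cos (ωh))`, differentiating `k` times gives
`φ⁽ᵏ⁾(x) = ε ωᵏ (sin (ωx + kπ/2) - sin (ω h(x) + kπ/2) + δ R_k(δ, ω h(x)))`,
where `R_0 = 0` and `R_{k+1} = (cos s · sin (s + (k+1)π/2) + ∂_s R_k) / (1 + δ cos s)`
(`iteratedDeriv_core`). All `R_k` are polynomial expressions in
`δ`, sines and cosines of `s`, and `(1 + δ cos s)⁻¹` (the class `Adm`); this class is stable under
`∂_s` and its members are uniformly bounded for `0 ≤ δ ≤ 1/2`.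

Finally `ωx = ω h(x) + ωβ + δ sin (ω h(x))`, so replacing `ωx` by `ω h(x) + ωβ` costs at most `δ`, and
`sin (A + 2πnβ) - sin A = 2 cos (A + πnβ) sin (πnβ)` produces the main term. The total error is
`O(ε ω^ι δ) = O(n^ν · n^{1-ι+ν})`, which is `O(n^{2ν-1})` because `ι ≥ 2`.
-/

open Real Filter Set

noncomputable section

/-- The modified Arnold circle map lift `g_{β,n}(x) = x + β + n^{-(ι-ν)} sin(2πnx)`. -/
def gA (ι : ℕ) (ν β : ℝ) (n : ℕ) : ℝ → ℝ :=
  fun x => x + β + ((n : ℝ) ^ ((ι : ℝ) - ν))⁻¹ * Real.sin (2 * π * n * x)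

/-- `φ_{β,n}(x) = g_{β,n}(x) + g_{β,n}^{-1}(x) - 2x`. -/
def φA (ι : ℕ) (ν β : ℝ) (n : ℕ) : ℝ → ℝ :=
  fun x => gA ι ν β n x + Function.invFun (gA ι ν β n) x - 2 * x

/-- The algebra of functions of `(δ, s)` generated by constants, `δ`, the functions `sin (s + a)`
and `(1 + δ cos s)⁻¹`. -/
inductive Adm : (ℝ → ℝ → ℝ) → Prop
  | const (c : ℝ) : Adm (fun _ _ => c)
  | param : Adm (fun δ _ => δ)
  | sin (a : ℝ) : Adm (fun _ s => Real.sin (s + a))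
  | inv : Adm (fun δ s => (1 + δ * Real.cos s)⁻¹)
  | add {F G : ℝ → ℝ → ℝ} : Adm F → Adm G → Adm (fun δ s => F δ s + G δ s)
  | mul {F G : ℝ → ℝ → ℝ} : Adm F → Adm G → Adm (fun δ s => F δ s * G δ s)

lemma Adm.cos : Adm (fun _ s => Real.cos s) := by
  have h := Adm.sin (π / 2)
  simpa only [Real.sin_add_pi_div_two] using h

lemma half_le_one_add {δ : ℝ} (h0 : 0 ≤ δ) (h1 : δ ≤ 1 / 2) (s : ℝ) :
    1 / 2 ≤ 1 + δ * Real.cos s := by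
  nlinarith [Real.neg_one_le_cos s]

lemma Adm.bounded {F : ℝ → ℝ → ℝ} (hF : Adm F) :
    ∃ C : ℝ, 0 ≤ C ∧ ∀ δ, 0 ≤ δ → δ ≤ 1 / 2 → ∀ s, |F δ s| ≤ C := by
  induction hF with
  | const c => exact ⟨|c|, abs_nonneg _, fun _ _ _ _ => le_rfl⟩
  | param => exact ⟨1 / 2, by norm_num, fun δ h0 h1 _ => by rwa [abs_of_nonneg h0]⟩
  | sin a => exact ⟨1, by norm_num, fun δ h0 h1 s => Real.abs_sin_le_one _⟩
  | inv =>
    refine ⟨2, by norm_num, fun δ h0 h1 s => ?_⟩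
    have h := half_le_one_add h0 h1 s
    rw [abs_of_nonneg (inv_nonneg.2 (by linarith))]
    calc (1 + δ * Real.cos s)⁻¹ ≤ (1 / 2 : ℝ)⁻¹ := inv_anti₀ (by norm_num) h
      _ = 2 := by norm_num
  | add _ _ ihF ihG =>
    obtain ⟨C, hC, hF⟩ := ihF
    obtain ⟨D, hD, hG⟩ := ihG
    exact ⟨C + D, by positivity, fun δ h0 h1 s =>
      (abs_add_le _ _).trans (add_le_add (hF δ h0 h1 s) (hG δ h0 h1 s))⟩
  | mul _ _ ihF ihG =>
    obtain ⟨C, hC, hF⟩ := ihF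
    obtain ⟨D, hD, hG⟩ := ihG
    refine ⟨C * D, by positivity, fun δ h0 h1 s => ?_⟩
    rw [abs_mul]
    exact mul_le_mul (hF δ h0 h1 s) (hG δ h0 h1 s) (abs_nonneg _) hC

lemma Adm.hasDerivAt {F : ℝ → ℝ → ℝ} (hF : Adm F) :
    ∃ F' : ℝ → ℝ → ℝ, Adm F' ∧
      ∀ δ, 0 ≤ δ → δ ≤ 1 / 2 → ∀ s, HasDerivAt (F δ) (F' δ s) s := by
  induction hF with
  | const c => exact ⟨_, .const 0, fun δ _ _ s => hasDerivAt_const s c⟩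
  | param => exact ⟨_, .const 0, fun δ _ _ s => hasDerivAt_const s δ⟩
  | sin a =>
    refine ⟨_, .sin (a + π / 2), fun δ _ _ s => ?_⟩
    have h := ((hasDerivAt_id s).add_const a).sin
    rw [mul_one] at h
    rw [← add_assoc, Real.sin_add_pi_div_two]
    exact h
  | inv =>
    refine ⟨_, .mul (.mul .param (.sin 0)) (.mul .inv .inv), fun δ h0 h1 s => ?_⟩
    have hp := half_le_one_add h0 h1 s
    have hne : 1 + δ * Real.cos s ≠ 0 := by linarith
    have h := (((Real.hasDerivAt_cos s).const_mul δ).const_add 1).fun_inv hne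
    refine h.congr_deriv ?_
    rw [add_zero]
    field_simp
  | add _ _ ihF ihG =>
    obtain ⟨F', hF', hF⟩ := ihF
    obtain ⟨G', hG', hG⟩ := ihG
    exact ⟨_, hF'.add hG', fun δ h0 h1 s => (hF δ h0 h1 s).add (hG δ h0 h1 s)⟩
  | mul hFa hGa ihF ihG =>
    obtain ⟨F', hF', hF⟩ := ihF
    obtain ⟨G', hG', hG⟩ := ihG
    exact ⟨_, (hF'.mul hGa).add (hFa.mul hG'),
      fun δ h0 h1 s => (hF δ h0 h1 s).mul (hG δ h0 h1 s)⟩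

/-- The `k`-th derivative of `ε (sin (ωx) - sin (ω h(x)))` for any `h` solving
`h' = 1 / (1 + ωε cos (ωh))`; the remainder `R` depends on `k` only. -/
lemma iteratedDeriv_core (k : ℕ) : ∃ R : ℝ → ℝ → ℝ, Adm R ∧
    ∀ (ε ω : ℝ) (h : ℝ → ℝ), 0 ≤ ω * ε → ω * ε ≤ 1 / 2 →
      (∀ x, HasDerivAt h (1 + ω * ε * Real.cos (ω * h x))⁻¹ x) →
      iteratedDeriv k (fun x => ε * (Real.sin (ω * x) - Real.sin (ω * h x))) =
        fun x => ε * ω ^ k * (Real.sin (ω * x + k * π / 2) - Real.sin (ω * h x + k * π / 2)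
          + ω * ε * R (ω * ε) (ω * h x)) := by
  induction k with
  | zero =>
    refine ⟨_, .const 0, fun ε ω h _ _ _ => ?_⟩
    simp
  | succ k ih =>
    obtain ⟨R, hR, hk⟩ := ih
    obtain ⟨R', hR', hd⟩ := hR.hasDerivAt
    refine ⟨_, .mul (.add (.mul .cos (.sin ((k + 1 : ℕ) * π / 2))) hR') .inv,
      fun ε ω h h0 h1 hh => ?_⟩
    rw [iteratedDeriv_succ, hk ε ω h h0 h1 hh]
    funext x
    have hp := half_le_one_add h0 h1 (ω * h x)
    have hne : 1 + ω * ε * Real.cos (ω * h x) ≠ 0 := by linarith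
    have e1 : ∀ s : ℝ, Real.sin (s + (k + 1 : ℕ) * π / 2) = Real.cos (s + k * π / 2) := by
      intro s
      rw [← Real.sin_add_pi_div_two]
      push_cast
      ring_nf
    have hωh := (hh x).const_mul ω
    have d1 := (((hasDerivAt_id x).const_mul ω).add_const (k * π / 2)).sin
    have d2 := (hωh.add_const (k * π / 2)).sin
    have d3 := ((hd (ω * ε) h0 h1 (ω * h x)).comp x hωh).const_mul (ω * ε)
    have d := ((d1.sub d2).add d3).const_mul (ε * ω ^ k)
    refine Eq.trans (HasDerivAt.deriv d) ?_
    simp only [e1, id]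
    have hinv := mul_inv_cancel₀ hne
    generalize (1 + ω * ε * Real.cos (ω * h x))⁻¹ = w at hinv ⊢
    rw [pow_succ]
    linear_combination (-(ε * ω ^ k * ω * Real.cos (ω * h x + k * π / 2))) * hinv

/-- The maps `x ↦ x + β + ε sin (ωx)` with `0 ≤ ωε ≤ 1/2` expand distances by at least `1/2`. -/
lemma expand_core {ε ω β : ℝ} (hε : 0 ≤ ε) (hω : 0 ≤ ω) (h1 : ω * ε ≤ 1 / 2) (a b : ℝ) :
    |a - b| ≤ 2 * |(a + β + ε * Real.sin (ω * a)) - (b + β + ε * Real.sin (ω * b))| := by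
  have hl : |Real.sin (ω * a) - Real.sin (ω * b)| ≤ |ω * a - ω * b| := by
    simpa [Real.dist_eq] using Real.lipschitzWith_sin.dist_le_mul (ω * a) (ω * b)
  have hb : |ε * (Real.sin (ω * a) - Real.sin (ω * b))| ≤ 1 / 2 * |a - b| := by
    rw [abs_mul, abs_of_nonneg hε]
    calc ε * |Real.sin (ω * a) - Real.sin (ω * b)| ≤ ε * |ω * a - ω * b| := by gcongr
      _ = ω * ε * |a - b| := by rw [← mul_sub, abs_mul, abs_of_nonneg hω]; ring
      _ ≤ 1 / 2 * |a - b| := by gcongr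
  have ht := abs_sub_abs_le_abs_sub (a - b) (-(ε * (Real.sin (ω * a) - Real.sin (ω * b))))
  rw [abs_neg] at ht
  have e : (a + β + ε * Real.sin (ω * a)) - (b + β + ε * Real.sin (ω * b))
      = (a - b) - -(ε * (Real.sin (ω * a) - Real.sin (ω * b))) := by ring
  rw [e]
  linarith

lemma surj_core {ε ω β : ℝ} (hε : 0 ≤ ε) :
    Function.Surjective (fun x : ℝ => x + β + ε * Real.sin (ω * x)) := by
  apply Continuous.surjective
  · fun_prop
  · refine tendsto_atTop_mono (f := fun x => x + (β - ε)) (fun x => ?_)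
      (tendsto_atTop_add_const_right _ _ tendsto_id)
    nlinarith [Real.neg_one_le_sin (ω * x)]
  · refine tendsto_atBot_mono (f := fun x => x + (β + ε))
      (g := fun x => x + β + ε * Real.sin (ω * x)) (fun x => ?_)
      (tendsto_atBot_add_const_right _ _ tendsto_id)
    nlinarith [Real.sin_le_one (ω * x)]

lemma hasDerivAt_inverse {ε ω β : ℝ} (hε : 0 ≤ ε) (hω : 0 ≤ ω) (h1 : ω * ε ≤ 1 / 2)
    {h : ℝ → ℝ} (hr : ∀ x, h x + β + ε * Real.sin (ω * h x) = x) (x : ℝ) :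
    HasDerivAt h (1 + ω * ε * Real.cos (ω * h x))⁻¹ x := by
  have hc : Continuous h := by
    refine (LipschitzWith.of_dist_le_mul (K := 2) fun a b => ?_).continuous
    have := expand_core (β := β) hε hω h1 (h a) (h b)
    rw [hr, hr] at this
    simpa [Real.dist_eq] using this
  have hp := half_le_one_add (mul_nonneg hω hε) h1 (ω * h x)
  have hg : HasDerivAt (fun y : ℝ => y + β + ε * Real.sin (ω * y))
      (1 + ω * ε * Real.cos (ω * h x)) (h x) := by
    have d := ((hasDerivAt_id (h x)).add_const β).add
      (((hasDerivAt_id (h x)).const_mul ω).sin.const_mul ε)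
    refine d.congr_deriv ?_
    simp only [id]
    ring
  exact hg.of_local_left_inverse hc.continuousAt (by linarith) (Eventually.of_forall hr)

theorem stmt_12 (ι : ℕ) (hι : 2 ≤ ι) (ν : ℝ) (hν : ν ∈ Set.Ioo (0:ℝ) (1/2)) :
    ∃ (C : ℝ) (N : ℕ), 0 < C ∧ ∀ n : ℕ, N ≤ n →
      (n : ℝ) ^ ((ι : ℝ) - ν - 1) > 2 * π ∧
      ∀ (β x : ℝ),
        abs (iteratedDeriv ι (φA ι ν β n) x -
          2 * (2 * π) ^ ι * (n : ℝ) ^ ν *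
            Real.cos (2 * π * n * Function.invFun (gA ι ν β n) x + π * n * β + ι * π / 2) *
            Real.sin (π * n * β)) ≤
          C * (n : ℝ) ^ (2 * ν - 1) := by
  obtain ⟨R, hR, hform⟩ := iteratedDeriv_core ι
  obtain ⟨C, hC, hbd⟩ := hR.bounded
  obtain ⟨hν0, hν1⟩ := hν
  have hι' : (2 : ℝ) ≤ ι := by exact_mod_cast hι
  have hpi := Real.pi_pos
  -- `n^{ι-ν-1} ≥ 4π` is what makes `δ = 2πn · n^{-(ι-ν)} ≤ 1/2`.
  have hev : ∀ᶠ n : ℕ in atTop, 4 * π ≤ (n : ℝ) ^ ((ι : ℝ) - ν - 1) ∧ 1 ≤ n :=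
    (((tendsto_rpow_atTop (by linarith : 0 < (ι : ℝ) - ν - 1)).comp
      tendsto_natCast_atTop_atTop).eventually_ge_atTop _).and (eventually_ge_atTop 1)
  obtain ⟨N, hN⟩ := eventually_atTop.1 hev
  refine ⟨(2 * π) ^ (ι + 1) * (1 + C), N, by positivity, fun n hn => ?_⟩
  obtain ⟨hn4, hn1⟩ := hN n hn
  refine ⟨by linarith, fun β x => ?_⟩
  have hn1' : (1 : ℝ) ≤ n := by exact_mod_cast hn1
  have hn0 : (0 : ℝ) < n := by linarith
  set ε : ℝ := ((n : ℝ) ^ ((ι : ℝ) - ν))⁻¹ with hεd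
  set ω : ℝ := 2 * π * n with hωd
  have hε : 0 < ε := by positivity
  have hω : 0 < ω := by positivity
  have hδ : ω * ε = 2 * π * (n : ℝ) ^ (ν + 1 - ι) := by
    have : (n : ℝ) ^ (ν + 1 - ι) = n * ε := by
      rw [hεd, ← Real.rpow_neg hn0.le, ← Real.rpow_one_add' hn0.le (by linarith)]
      congr 1
      ring
    rw [this]; ring
  have hδ1 : ω * ε ≤ 1 / 2 := by
    have : (n : ℝ) ^ (ν + 1 - ι) = ((n : ℝ) ^ ((ι : ℝ) - ν - 1))⁻¹ := by
      rw [← Real.rpow_neg hn0.le]; congr 1; ring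
    rw [hδ, this, ← div_eq_mul_inv, div_le_iff₀ (by linarith)]
    linarith
  have hδ2 : ω * ε ≤ 2 * π * (n : ℝ) ^ (ν - 1) := by
    rw [hδ]
    exact mul_le_mul_of_nonneg_left (Real.rpow_le_rpow_of_exponent_le hn1' (by linarith))
      (by positivity)
  have hεω : ε * ω ^ ι = (2 * π) ^ ι * (n : ℝ) ^ ν := by
    have : (n : ℝ) ^ ν = ε * (n : ℝ) ^ ι := by
      rw [hεd, ← Real.rpow_neg hn0.le, ← Real.rpow_natCast, ← Real.rpow_add hn0]
      congr 1
      ring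
    rw [this, hωd, mul_pow]
    ring
  set h : ℝ → ℝ := Function.invFun (gA ι ν β n) with hh
  have hr : ∀ x, h x + β + ε * Real.sin (ω * h x) = x :=
    Function.rightInverse_invFun (surj_core (β := β) (ω := ω) hε.le)
  have hφ : φA ι ν β n = fun x => ε * (Real.sin (ω * x) - Real.sin (ω * h x)) := by
    funext y
    have := hr y
    simp only [φA, gA, ← hh, ← hεd, ← hωd]
    linarith
  have hδ0 : 0 ≤ ω * ε := by positivity
  rw [hφ, hform ε ω h hδ0 hδ1 (hasDerivAt_inverse hε.le hω.le hδ1 hr)]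
  -- `A` and `A + ω * β` are the two phases whose sines subtract to the main term.
  set A : ℝ := ω * h x + ι * π / 2 with hA
  have hmain : 2 * (2 * π) ^ ι * (n : ℝ) ^ ν *
      Real.cos (ω * h x + π * n * β + ι * π / 2) * Real.sin (π * n * β)
      = ε * ω ^ ι * (Real.sin (A + ω * β) - Real.sin A) := by
    rw [Real.sin_sub_sin, hεω]
    have e1 : (A + ω * β - A) / 2 = π * n * β := by rw [hωd]; ring
    have e2 : (A + ω * β + A) / 2 = ω * h x + π * n * β + ι * π / 2 := by rw [hA, hωd]; ring
    rw [e1, e2]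
    ring
  have hx : ω * x + ι * π / 2 = A + ω * β + ω * ε * Real.sin (ω * h x) := by
    linear_combination -ω * hr x
  have hs : |Real.sin (A + ω * β + ω * ε * Real.sin (ω * h x)) - Real.sin (A + ω * β)| ≤ ω * ε := by
    have hl := Real.lipschitzWith_sin.dist_le_mul
      (A + ω * β + ω * ε * Real.sin (ω * h x)) (A + ω * β)
    simp only [Real.dist_eq, NNReal.coe_one, one_mul, add_sub_cancel_left] at hl
    refine hl.trans ?_
    rw [abs_mul, abs_of_nonneg hδ0]
    exact mul_le_of_le_one_right hδ0 (Real.abs_sin_le_one _)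
  have hRb := hbd (ω * ε) hδ0 hδ1 (ω * h x)
  have hdiff : ε * ω ^ ι * (Real.sin (ω * x + ι * π / 2) - Real.sin A
        + ω * ε * R (ω * ε) (ω * h x)) - ε * ω ^ ι * (Real.sin (A + ω * β) - Real.sin A)
      = ε * ω ^ ι * ((Real.sin (A + ω * β + ω * ε * Real.sin (ω * h x)) - Real.sin (A + ω * β))
        + ω * ε * R (ω * ε) (ω * h x)) := by
    rw [hx]; ring
  have hsum : |(Real.sin (A + ω * β + ω * ε * Real.sin (ω * h x)) - Real.sin (A + ω * β))
        + ω * ε * R (ω * ε) (ω * h x)| ≤ ω * ε * (1 + C) := by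
    refine (abs_add_le _ _).trans ?_
    rw [abs_mul (ω * ε), abs_of_nonneg hδ0]
    nlinarith
  rw [hmain]
  simp only
  rw [hdiff, abs_mul, abs_of_nonneg (by positivity : 0 ≤ ε * ω ^ ι)]
  have hpow : (n : ℝ) ^ (2 * ν - 1) = (n : ℝ) ^ ν * (n : ℝ) ^ (ν - 1) := by
    rw [← Real.rpow_add hn0]; congr 1; ring
  calc _ ≤ ε * ω ^ ι * (ω * ε * (1 + C)) := by gcongr
    _ ≤ (2 * π) ^ ι * (n : ℝ) ^ ν * (2 * π * (n : ℝ) ^ (ν - 1) * (1 + C)) := by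
      rw [hεω]; gcongr
    _ = _ := by rw [hpow]; ring
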